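/- arXiv:2111.11792 — 3 statements merged into one kernel-verified Lean document; each statement's English description precedes it below -/
import Mathlib

section
/- Let d ≥ 1 be a natural number and let ε be a real number with d/2 < ε < d. Then the function (x,y) ↦ (1+‖x‖²)^{−ε}·(1+‖y‖²)^{−ε}·‖x−y‖^{ε−d} is Lebesgue integrable on ℝ^d × ℝ^d and ∫_{ℝ^d}∫_{ℝ^d} (1+‖x‖²)^{−ε}(1+‖y‖²)^{−ε}‖x−y‖^{ε−d} dx dy = π^d·Γ(ε/2)³·Γ((3ε−d)/2)/(Γ(d/2)·Γ(ε)³). (This is the inversion-reduced form of the regularized trace of the spin-zero conformal partial wave, obtained from the three-propagator form via the inversion x ↦ x/‖x‖².) -/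
open Real MeasureTheory

/-!
Each factor `r ^ (-a)` is replaced by its Schwinger parametrisation
`Γ(a)⁻¹ ∫₀^∞ t ^ (a - 1) e ^ (-r t) dt`. By Tonelli the space variables can then be integrated
first; they see a Gaussian, whose integral is a power of the determinant `s t + (s + t) u` of its
quadratic form. The parameter `u` of the Riesz kernel `‖x - y‖ ^ (γ - n)`, `n = dim V`, gives a
beta integral and leaves `(s t) ^ (-γ / 2) (s + t) ^ ((γ - n) / 2) e ^ (-(s + t))`; parametrising
the power of `s + t` once more makes the remaining integral factor into Gamma and beta integrals.
All integrands are nonnegative, so integrability comes with the value.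
-/

open Set
open ENNReal (ofReal)

section Lintegral

variable {X : Type*} [MeasurableSpace X] {μ : Measure X} {f : X → ℝ} {c : ℝ}

lemma lintegral_ofReal_eq_of_integral_eq (hf : 0 ≤ᵐ[μ] f) (hc : c ≠ 0) (h : ∫ x, f x ∂μ = c) :
    ∫⁻ x, ofReal (f x) ∂μ = ofReal c := by
  rw [← ofReal_integral_eq_lintegral_ofReal (.of_integral_ne_zero (h ▸ hc)) hf, h]

lemma lintegral_ofReal_const_mul_eq {k : ℝ} (hk : 0 ≤ k) (h : ∫⁻ x, ofReal (f x) ∂μ = ofReal c) :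
    ∫⁻ x, ofReal (k * f x) ∂μ = ofReal (k * c) := by
  simp_rw [ENNReal.ofReal_mul hk]
  rw [lintegral_const_mul' _ _ ENNReal.ofReal_ne_top, h]

lemma integrable_and_integral_eq_of_lintegral_ofReal (hfm : AEStronglyMeasurable f μ)
    (hf : 0 ≤ᵐ[μ] f) (hc : 0 ≤ c) (h : ∫⁻ x, ofReal (f x) ∂μ = ofReal c) :
    Integrable f μ ∧ ∫ x, f x ∂μ = c := by
  refine ⟨⟨hfm, ?_⟩, ?_⟩
  · rw [hasFiniteIntegral_iff_ofReal hf, h]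
    exact ENNReal.ofReal_lt_top
  · rw [integral_eq_lintegral_of_nonneg_ae hf hfm, h, ENNReal.toReal_ofReal hc]

lemma ae_fst_ne_snd {ν : Measure X} [SFinite ν] [MeasurableEq X] [NullSingletonClass ν] :
    ∀ᵐ z ∂μ.prod ν, z.1 ≠ z.2 :=
  (Measure.ae_prod_iff_ae_ae measurableSet_diagonal.compl).2 <|
    .of_forall fun x => (Measure.ae_ne ν x).mono fun _ hy => hy.symm

end Lintegral

section Schwinger

lemma lintegral_rpow_mul_exp_neg_mul_Ioi {a r : ℝ} (ha : 0 < a) (hr : 0 < r) :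
    ∫⁻ t in Ioi 0, ofReal (t ^ (a - 1) * exp (-(r * t))) = ofReal (Gamma a * r ^ (-a)) := by
  refine lintegral_ofReal_eq_of_integral_eq ?_
    (mul_pos (Gamma_pos_of_pos ha) (rpow_pos_of_pos hr _)).ne' ?_
  · filter_upwards [ae_restrict_mem measurableSet_Ioi] with t (ht : 0 < t)
    exact mul_nonneg (rpow_nonneg ht.le _) (exp_nonneg _)
  · rw [integral_rpow_mul_exp_neg_mul_Ioi ha hr, one_div, inv_rpow hr.le, ← rpow_neg hr.le,
      mul_comm]

lemma lintegral_mul_rpow_neg_eq_lintegral_lintegral_exp {X : Type*} [MeasurableSpace X]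
    {μ : Measure X} [SFinite μ] {a : ℝ} (ha : 0 < a) {g r : X → ℝ} (hg : Measurable g)
    (hr : Measurable r) (hr_pos : ∀ᵐ x ∂μ, 0 < r x) :
    ∫⁻ x, ofReal (g x * r x ^ (-a)) ∂μ
      = ∫⁻ t in Ioi 0, ofReal (t ^ (a - 1) / Gamma a) *
          ∫⁻ x, ofReal (g x * exp (-(r x * t))) ∂μ := by
  have hΓ := Gamma_pos_of_pos ha
  calc ∫⁻ x, ofReal (g x * r x ^ (-a)) ∂μ
      = ∫⁻ x, (∫⁻ t in Ioi 0,
          ofReal (g x) * ofReal ((Gamma a)⁻¹ * (t ^ (a - 1) * exp (-(r x * t))))) ∂μ := by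
        refine lintegral_congr_ae (hr_pos.mono fun x hx => ?_)
        dsimp only
        rw [lintegral_const_mul' _ _ ENNReal.ofReal_ne_top, lintegral_ofReal_const_mul_eq
          (inv_nonneg.2 hΓ.le) (lintegral_rpow_mul_exp_neg_mul_Ioi ha hx),
          inv_mul_cancel_left₀ hΓ.ne', ENNReal.ofReal_mul' (rpow_nonneg hx.le _)]
    _ = ∫⁻ t in Ioi 0, ∫⁻ x,
          ofReal (g x) * ofReal ((Gamma a)⁻¹ * (t ^ (a - 1) * exp (-(r x * t)))) ∂μ :=
        lintegral_lintegral_swap (Measurable.aemeasurable (by fun_prop))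
    _ = _ := by
        refine setLIntegral_congr_fun measurableSet_Ioi fun t (ht : 0 < t) => ?_
        rw [← lintegral_const_mul' _ _ ENNReal.ofReal_ne_top]
        refine lintegral_congr fun x => ?_
        rw [← ENNReal.ofReal_mul' (by positivity), ← ENNReal.ofReal_mul (by positivity)]
        congr 1
        ring

lemma lintegral_mul_rpow_neg_mul_rpow_neg_eq_lintegral_lintegral_exp {X : Type*}
    [MeasurableSpace X] {μ : Measure X} [SFinite μ] {a b : ℝ} (ha : 0 < a) (hb : 0 < b)
    {g q r : X → ℝ} (hg : Measurable g) (hq : Measurable q) (hr : Measurable r)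
    (hq_pos : ∀ᵐ x ∂μ, 0 < q x) (hr_pos : ∀ᵐ x ∂μ, 0 < r x) :
    ∫⁻ x, ofReal (g x * q x ^ (-a) * r x ^ (-b)) ∂μ
      = ∫⁻ z in Ioi (0 : ℝ) ×ˢ Ioi (0 : ℝ),
          ofReal (z.1 ^ (a - 1) * z.2 ^ (b - 1) / (Gamma a * Gamma b)) *
            ∫⁻ x, ofReal (g x * exp (-(q x * z.1 + r x * z.2))) ∂μ := by
  have hmeas : Measurable fun z : ℝ × ℝ =>
      ofReal (z.1 ^ (a - 1) * z.2 ^ (b - 1) / (Gamma a * Gamma b)) *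
        ∫⁻ x, ofReal (g x * exp (-(q x * z.1 + r x * z.2))) ∂μ :=
    .mul (by fun_prop) (Measurable.lintegral_prod_right (by fun_prop))
  rw [Measure.volume_eq_prod, ← Measure.prod_restrict, lintegral_prod_symm _ hmeas.aemeasurable,
    lintegral_mul_rpow_neg_eq_lintegral_lintegral_exp hb (by fun_prop) hr hr_pos]
  refine setLIntegral_congr_fun measurableSet_Ioi fun t (ht : 0 < t) => ?_
  have move_exp (x : X) : g x * q x ^ (-a) * exp (-(r x * t))
      = g x * exp (-(r x * t)) * q x ^ (-a) := mul_right_comm ..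
  simp_rw [move_exp]
  rw [lintegral_mul_rpow_neg_eq_lintegral_lintegral_exp ha (by fun_prop) hq hq_pos,
    ← lintegral_const_mul' _ _ ENNReal.ofReal_ne_top]
  refine setLIntegral_congr_fun measurableSet_Ioi fun s (_ : 0 < s) => ?_
  rw [← mul_assoc, ← ENNReal.ofReal_mul (by positivity)]
  congr 1
  · congr 1
    ring
  · simp_rw [mul_assoc, ← exp_add, ← neg_add_rev]

lemma lintegral_rpow_mul_add_mul_rpow_neg_Ioi {a c A B : ℝ} (ha : 0 < a) (hac : a < c)
    (hA : 0 < A) (hB : 0 < B) :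
    ∫⁻ u in Ioi 0, ofReal (u ^ (a - 1) * (A + B * u) ^ (-c))
      = ofReal (Gamma a * Gamma (c - a) / Gamma c * (B ^ (-a) * A ^ (a - c))) := by
  have hc : 0 < c := ha.trans hac
  have inner (w : ℝ) (hw : 0 < w) :
      ∫⁻ u in Ioi 0, ofReal (u ^ (a - 1) * exp (-((A + B * u) * w)))
        = ofReal (exp (-(A * w)) * (Gamma a * (B * w) ^ (-a))) := by
    rw [← lintegral_ofReal_const_mul_eq (exp_nonneg _)
      (lintegral_rpow_mul_exp_neg_mul_Ioi ha (mul_pos hB hw))]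
    refine lintegral_congr fun u => ?_
    rw [mul_left_comm, ← exp_add]
    ring_nf
  calc _ = ∫⁻ w in Ioi 0, ofReal (w ^ (c - 1) / Gamma c) *
            ∫⁻ u in Ioi 0, ofReal (u ^ (a - 1) * exp (-((A + B * u) * w))) := by
        refine lintegral_mul_rpow_neg_eq_lintegral_lintegral_exp hc (by fun_prop) (by fun_prop) ?_
        filter_upwards [ae_restrict_mem measurableSet_Ioi] with u (hu : 0 < u)
        positivity
    _ = ∫⁻ w in Ioi 0, ofReal ((Gamma a * B ^ (-a) / Gamma c) *
            (w ^ (c - a - 1) * exp (-(A * w)))) := by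
        refine setLIntegral_congr_fun measurableSet_Ioi fun w (hw : 0 < w) => ?_
        rw [inner w hw, ← ENNReal.ofReal_mul (by positivity), mul_rpow hB.le hw.le,
          show c - a - 1 = (c - 1) + (-a) by ring, rpow_add hw]
        congr 1
        ring
    _ = _ := by
        rw [lintegral_ofReal_const_mul_eq (by positivity)
          (lintegral_rpow_mul_exp_neg_mul_Ioi (sub_pos.2 hac) hA), neg_sub]
        congr 1
        ring

lemma lintegral_rpow_mul_rpow_mul_exp_neg_add_mul_add_rpow_neg {a p q : ℝ} (ha : 0 < a)
    (hp : 0 < p) (hq : 0 < q) (hapq : a < p + q) :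
    ∫⁻ z in Ioi (0 : ℝ) ×ˢ Ioi (0 : ℝ), ofReal
        (z.1 ^ (p - 1) * z.2 ^ (q - 1) * exp (-(z.1 + z.2)) * (z.1 + z.2) ^ (-a))
      = ofReal (Gamma p * Gamma q * Gamma (p + q - a) / Gamma (p + q)) := by
  have inner (v : ℝ) (hv : 0 < v) :
      ∫⁻ z in Ioi (0 : ℝ) ×ˢ Ioi (0 : ℝ), ofReal
          (z.1 ^ (p - 1) * z.2 ^ (q - 1) * exp (-(z.1 + z.2)) * exp (-((z.1 + z.2) * v)))
        = ofReal (Gamma p * (1 + 1 * v) ^ (-p)) * ofReal (Gamma q * (1 + 1 * v) ^ (-q)) := by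
    rw [← lintegral_rpow_mul_exp_neg_mul_Ioi hp (by positivity),
      ← lintegral_rpow_mul_exp_neg_mul_Ioi hq (by positivity),
      ← lintegral_prod_mul (Measurable.aemeasurable (by fun_prop))
        (Measurable.aemeasurable (by fun_prop)), Measure.prod_restrict, ← Measure.volume_eq_prod]
    refine setLIntegral_congr_fun (measurableSet_Ioi.prod measurableSet_Ioi) ?_
    rintro ⟨s, t⟩ ⟨hs : 0 < s, _⟩
    dsimp only
    rw [← ENNReal.ofReal_mul (by positivity), mul_mul_mul_comm, ← exp_add, mul_assoc, ← exp_add]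
    ring_nf
  calc _ = ∫⁻ v in Ioi 0, ofReal (v ^ (a - 1) / Gamma a) *
            ∫⁻ z in Ioi (0 : ℝ) ×ˢ Ioi (0 : ℝ), ofReal
              (z.1 ^ (p - 1) * z.2 ^ (q - 1) * exp (-(z.1 + z.2)) * exp (-((z.1 + z.2) * v))) := by
        refine lintegral_mul_rpow_neg_eq_lintegral_lintegral_exp ha (by fun_prop) (by fun_prop) ?_
        filter_upwards [ae_restrict_mem (measurableSet_Ioi.prod measurableSet_Ioi)] with z hz
        exact add_pos hz.1 hz.2
    _ = ∫⁻ v in Ioi 0, ofReal ((Gamma p * Gamma q / Gamma a) *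
            (v ^ (a - 1) * (1 + 1 * v) ^ (-(p + q)))) := by
        refine setLIntegral_congr_fun measurableSet_Ioi fun v (hv : 0 < v) => ?_
        rw [inner v hv, ← ENNReal.ofReal_mul (by positivity), ← ENNReal.ofReal_mul (by positivity),
          neg_add, rpow_add (by positivity)]
        congr 1
        ring
    _ = _ := by
        rw [lintegral_ofReal_const_mul_eq (by positivity)
          (lintegral_rpow_mul_add_mul_rpow_neg_Ioi ha hapq one_pos one_pos), one_rpow, one_rpow]
        congr 1
        field_simp

end Schwinger

section InnerProductSpace

open Module (finrank)

variable {V : Type*} [NormedAddCommGroup V] [InnerProductSpace ℝ V] [FiniteDimensional ℝ V]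
  [MeasurableSpace V] [BorelSpace V]

lemma lintegral_exp_neg_mul_norm_sq {b : ℝ} (hb : 0 < b) :
    ∫⁻ x : V, ofReal (exp (-b * ‖x‖ ^ 2)) = ofReal ((π / b) ^ ((finrank ℝ V : ℝ) / 2)) :=
  lintegral_ofReal_eq_of_integral_eq (.of_forall fun _ => exp_nonneg _)
    (rpow_pos_of_pos (div_pos pi_pos hb) _).ne' (GaussianFourier.integral_rexp_neg_mul_sq_norm hb)

lemma mul_norm_sq_add_mul_norm_sub_sq {E : Type*} [NormedAddCommGroup E] [InnerProductSpace ℝ E]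
    {t u : ℝ} (htu : t + u ≠ 0) (x y : E) :
    t * ‖y‖ ^ 2 + u * ‖x - y‖ ^ 2
      = t * u / (t + u) * ‖x‖ ^ 2 + (t + u) * ‖y - (u / (t + u)) • x‖ ^ 2 := by
  rw [norm_sub_sq_real, norm_sub_sq_real, norm_smul, inner_smul_right, real_inner_comm,
    mul_pow, norm_eq_abs, sq_abs]
  field_simp
  ring

lemma lintegral_exp_neg_norm_sq_add_norm_sub_sq {t u : ℝ} (ht : 0 < t) (hu : 0 < u) (x : V) :
    ∫⁻ y : V, ofReal (exp (-(t * ‖y‖ ^ 2 + u * ‖x - y‖ ^ 2)))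
      = ofReal (exp (-(t * u / (t + u)) * ‖x‖ ^ 2) *
          (π / (t + u)) ^ ((finrank ℝ V : ℝ) / 2)) := by
  have htu : 0 < t + u := add_pos ht hu
  rw [← lintegral_ofReal_const_mul_eq (exp_nonneg _) (lintegral_exp_neg_mul_norm_sq (V := V) htu),
    ← lintegral_sub_right_eq_self
      (fun y => ofReal (exp (-(t * u / (t + u)) * ‖x‖ ^ 2) * exp (-(t + u) * ‖y‖ ^ 2)))
      ((u / (t + u)) • x)]
  refine lintegral_congr fun y => ?_
  rw [mul_norm_sq_add_mul_norm_sub_sq htu.ne', ← exp_add]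
  ring_nf

lemma lintegral_prod_exp_neg_norm_sq {s t u : ℝ} (hs : 0 < s) (ht : 0 < t) (hu : 0 < u) :
    ∫⁻ z : V × V, ofReal (exp (-(s * ‖z.1‖ ^ 2 + t * ‖z.2‖ ^ 2 + u * ‖z.1 - z.2‖ ^ 2)))
      = ofReal (π ^ finrank ℝ V * (s * t + (s + t) * u) ^ (-((finrank ℝ V : ℝ) / 2))) := by
  have inner (x : V) :
      ∫⁻ y : V, ofReal (exp (-(s * ‖x‖ ^ 2 + t * ‖y‖ ^ 2 + u * ‖x - y‖ ^ 2)))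
        = ofReal ((π / (t + u)) ^ ((finrank ℝ V : ℝ) / 2) *
            exp (-(s + t * u / (t + u)) * ‖x‖ ^ 2)) := by
    simp_rw [add_assoc, neg_add (s * _), exp_add]
    rw [lintegral_ofReal_const_mul_eq (exp_nonneg _)
      (lintegral_exp_neg_norm_sq_add_norm_sub_sq ht hu x), ← mul_assoc, ← exp_add, mul_comm]
    ring_nf
  have det : π / (t + u) * (π / (s + t * u / (t + u))) = π ^ 2 * (s * t + (s + t) * u)⁻¹ := by
    have : s * t + (s + t) * u ≠ 0 := by positivity
    have : s * (t + u) + t * u ≠ 0 := by positivity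
    field_simp
    ring
  rw [Measure.volume_eq_prod, lintegral_prod _ (Measurable.aemeasurable (by fun_prop))]
  simp_rw [inner]
  rw [lintegral_ofReal_const_mul_eq (by positivity)
      (lintegral_exp_neg_mul_norm_sq (V := V) (by positivity)),
    ← mul_rpow (by positivity) (by positivity), det, mul_rpow (by positivity) (by positivity),
    inv_rpow (by positivity), ← rpow_neg (by positivity), ← rpow_natCast_mul pi_nonneg,
    Nat.cast_ofNat, mul_div_cancel₀ _ two_ne_zero, rpow_natCast]

lemma lintegral_exp_neg_norm_sq_mul_norm_sub_rpow {γ s t : ℝ} (hγ : 0 < γ)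
    (hγV : γ < finrank ℝ V) (hs : 0 < s) (ht : 0 < t) :
    ∫⁻ z : V × V, ofReal
        (exp (-(s * ‖z.1‖ ^ 2 + t * ‖z.2‖ ^ 2)) * ‖z.1 - z.2‖ ^ (γ - finrank ℝ V))
      = ofReal (π ^ finrank ℝ V * Gamma (γ / 2) / Gamma ((finrank ℝ V : ℝ) / 2) *
          ((s * t) ^ (-(γ / 2)) * (s + t) ^ (-((finrank ℝ V - γ) / 2)))) := by
  set a : ℝ := (finrank ℝ V - γ) / 2 with ha_def
  have ha : 0 < a := half_pos (sub_pos.2 hγV)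
  have : Nontrivial V := Module.nontrivial_of_finrank_pos (R := ℝ) (by exact_mod_cast hγ.trans hγV)
  have hdiag : ∀ᵐ z : V × V, 0 < ‖z.1 - z.2‖ ^ 2 := by
    filter_upwards [ae_fst_ne_snd (μ := volume) (ν := volume)] with z hz
    exact pow_pos (norm_pos_iff.2 (sub_ne_zero.2 hz)) 2
  calc _ = ∫⁻ z : V × V, ofReal
            (exp (-(s * ‖z.1‖ ^ 2 + t * ‖z.2‖ ^ 2)) * (‖z.1 - z.2‖ ^ 2) ^ (-a)) := by
        refine lintegral_congr fun z => ?_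
        rw [← rpow_natCast_mul (norm_nonneg _), ha_def]
        ring_nf
    _ = ∫⁻ u in Ioi 0, ofReal (u ^ (a - 1) / Gamma a) * ∫⁻ z : V × V, ofReal
            (exp (-(s * ‖z.1‖ ^ 2 + t * ‖z.2‖ ^ 2)) * exp (-(‖z.1 - z.2‖ ^ 2 * u))) :=
        lintegral_mul_rpow_neg_eq_lintegral_lintegral_exp ha (by fun_prop) (by fun_prop) hdiag
    _ = ∫⁻ u in Ioi 0, ofReal (π ^ finrank ℝ V / Gamma a *
            (u ^ (a - 1) * (s * t + (s + t) * u) ^ (-((finrank ℝ V : ℝ) / 2)))) := by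
        refine setLIntegral_congr_fun measurableSet_Ioi fun u (hu : 0 < u) => ?_
        simp_rw [← exp_add, ← neg_add, mul_comm _ u]
        rw [lintegral_prod_exp_neg_norm_sq hs ht hu, ← ENNReal.ofReal_mul (by positivity)]
        congr 1
        ring_nf
    _ = _ := by
        rw [lintegral_ofReal_const_mul_eq (by positivity) (lintegral_rpow_mul_add_mul_rpow_neg_Ioi
          ha (by linarith) (mul_pos hs ht) (add_pos hs ht)),
          show (finrank ℝ V : ℝ) / 2 - a = γ / 2 by rw [ha_def]; ring,
          show a - (finrank ℝ V : ℝ) / 2 = -(γ / 2) by rw [ha_def]; ring]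
        congr 1
        field_simp

lemma lintegral_norm_sub_rpow_mul_exp_neg_one_add_norm_sq {γ s t : ℝ} (hγ : 0 < γ)
    (hγV : γ < finrank ℝ V) (hs : 0 < s) (ht : 0 < t) :
    ∫⁻ z : V × V, ofReal (‖z.1 - z.2‖ ^ (γ - finrank ℝ V) *
        exp (-((1 + ‖z.1‖ ^ 2) * s + (1 + ‖z.2‖ ^ 2) * t)))
      = ofReal (exp (-(s + t)) *
          (π ^ finrank ℝ V * Gamma (γ / 2) / Gamma ((finrank ℝ V : ℝ) / 2) *
            ((s * t) ^ (-(γ / 2)) * (s + t) ^ (-((finrank ℝ V - γ) / 2))))) := by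
  rw [← lintegral_ofReal_const_mul_eq (exp_nonneg _)
    (lintegral_exp_neg_norm_sq_mul_norm_sub_rpow hγ hγV hs ht)]
  refine lintegral_congr fun z => ?_
  rw [← mul_assoc, ← exp_add, mul_comm]
  ring_nf

lemma lintegral_one_add_norm_sq_rpow_mul_norm_sub_rpow {α β γ : ℝ} (hγ : 0 < γ)
    (hγV : γ < finrank ℝ V) (hα : γ < 2 * α) (hβ : γ < 2 * β)
    (hαβ : finrank ℝ V + γ < 2 * (α + β)) :
    ∫⁻ z : V × V, ofReal
        ((1 + ‖z.1‖ ^ 2) ^ (-α) * (1 + ‖z.2‖ ^ 2) ^ (-β) * ‖z.1 - z.2‖ ^ (γ - finrank ℝ V))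
      = ofReal (π ^ finrank ℝ V * Gamma (γ / 2) * Gamma (α - γ / 2) * Gamma (β - γ / 2) *
          Gamma (α + β - (finrank ℝ V + γ) / 2) /
          (Gamma ((finrank ℝ V : ℝ) / 2) * Gamma α * Gamma β * Gamma (α + β - γ))) := by
  have hα0 : 0 < α := by linarith
  have hβ0 : 0 < β := by linarith
  have one_add_norm_sq_pos (x : V) : 0 < 1 + ‖x‖ ^ 2 := by positivity
  calc _ = ∫⁻ z : V × V, ofReal
            (‖z.1 - z.2‖ ^ (γ - finrank ℝ V) * (1 + ‖z.1‖ ^ 2) ^ (-α) * (1 + ‖z.2‖ ^ 2) ^ (-β)) :=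
        lintegral_congr fun z => by rw [mul_comm, ← mul_assoc]
    _ = ∫⁻ z in Ioi (0 : ℝ) ×ˢ Ioi (0 : ℝ),
          ofReal (z.1 ^ (α - 1) * z.2 ^ (β - 1) / (Gamma α * Gamma β)) *
            ∫⁻ w : V × V, ofReal (‖w.1 - w.2‖ ^ (γ - finrank ℝ V) *
              exp (-((1 + ‖w.1‖ ^ 2) * z.1 + (1 + ‖w.2‖ ^ 2) * z.2))) :=
        lintegral_mul_rpow_neg_mul_rpow_neg_eq_lintegral_lintegral_exp hα0 hβ0 (by fun_prop)
          (by fun_prop) (by fun_prop) (.of_forall fun z => one_add_norm_sq_pos z.1)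
          (.of_forall fun z => one_add_norm_sq_pos z.2)
    _ = ∫⁻ z in Ioi (0 : ℝ) ×ˢ Ioi (0 : ℝ), ofReal
          (π ^ finrank ℝ V * Gamma (γ / 2) / (Gamma ((finrank ℝ V : ℝ) / 2) * Gamma α * Gamma β) *
            (z.1 ^ (α - γ / 2 - 1) * z.2 ^ (β - γ / 2 - 1) * exp (-(z.1 + z.2)) *
              (z.1 + z.2) ^ (-((finrank ℝ V - γ) / 2)))) := by
        refine setLIntegral_congr_fun (measurableSet_Ioi.prod measurableSet_Ioi) ?_
        rintro ⟨s, t⟩ ⟨hs : 0 < s, ht : 0 < t⟩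
        dsimp only
        rw [lintegral_norm_sub_rpow_mul_exp_neg_one_add_norm_sq hγ hγV hs ht,
          ← ENNReal.ofReal_mul (by positivity), mul_rpow hs.le ht.le,
          show α - γ / 2 - 1 = (α - 1) + -(γ / 2) by ring, rpow_add hs,
          show β - γ / 2 - 1 = (β - 1) + -(γ / 2) by ring, rpow_add ht]
        congr 1
        ring
    _ = _ := by
        rw [lintegral_ofReal_const_mul_eq (by positivity)
          (lintegral_rpow_mul_rpow_mul_exp_neg_add_mul_add_rpow_neg (by linarith) (by linarith)
            (by linarith) (by linarith)),
          show α - γ / 2 + (β - γ / 2) = α + β - γ by ring,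
          show α + β - γ - (finrank ℝ V - γ) / 2 = α + β - (finrank ℝ V + γ) / 2 by ring]
        congr 1
        ring

theorem regularized_CPW_trace_inverted_general {α β γ : ℝ} (hγ : 0 < γ) (hγV : γ < finrank ℝ V)
    (hα : γ < 2 * α) (hβ : γ < 2 * β) (hαβ : finrank ℝ V + γ < 2 * (α + β)) :
    Integrable (fun p : V × V =>
        (1 + ‖p.1‖ ^ 2) ^ (-α) * (1 + ‖p.2‖ ^ 2) ^ (-β) * ‖p.1 - p.2‖ ^ (γ - finrank ℝ V)) ∧
    ∫ x : V, ∫ y : V,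
        (1 + ‖x‖ ^ 2) ^ (-α) * (1 + ‖y‖ ^ 2) ^ (-β) * ‖x - y‖ ^ (γ - finrank ℝ V)
      = π ^ finrank ℝ V * Gamma (γ / 2) * Gamma (α - γ / 2) * Gamma (β - γ / 2) *
          Gamma (α + β - (finrank ℝ V + γ) / 2) /
          (Gamma ((finrank ℝ V : ℝ) / 2) * Gamma α * Gamma β * Gamma (α + β - γ)) := by
  have hαγ : 0 < α - γ / 2 := by linarith
  have hβγ : 0 < β - γ / 2 := by linarith
  have hαβV : 0 < α + β - (finrank ℝ V + γ) / 2 := by linarith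
  have hαβγ : 0 < α + β - γ := by linarith
  have hα0 : 0 < α := by linarith
  have hβ0 : 0 < β := by linarith
  obtain ⟨hint, hval⟩ := integrable_and_integral_eq_of_lintegral_ofReal
    (Measurable.aestronglyMeasurable (by fun_prop)) (.of_forall fun z => by positivity)
    (by positivity) (lintegral_one_add_norm_sq_rpow_mul_norm_sub_rpow (V := V) hγ hγV hα hβ hαβ)
  exact ⟨hint, (integral_prod _ hint).symm.trans hval⟩

end InnerProductSpace

theorem regularized_CPW_trace_inverted (d : ℕ) (hd : 1 ≤ d) (ε : ℝ)
    (hε1 : (d : ℝ) / 2 < ε) (hε2 : ε < (d : ℝ)) :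
    MeasureTheory.Integrable
      (fun p : EuclideanSpace ℝ (Fin d) × EuclideanSpace ℝ (Fin d) =>
        (1 + ‖p.1‖ ^ 2) ^ (-ε) * (1 + ‖p.2‖ ^ 2) ^ (-ε) * ‖p.1 - p.2‖ ^ (ε - (d : ℝ))) ∧
    ∫ x : EuclideanSpace ℝ (Fin d), ∫ y : EuclideanSpace ℝ (Fin d),
        (1 + ‖x‖ ^ 2) ^ (-ε) * (1 + ‖y‖ ^ 2) ^ (-ε) * ‖x - y‖ ^ (ε - (d : ℝ))
      = π ^ d * Real.Gamma (ε / 2) ^ 3 * Real.Gamma ((3 * ε - d) / 2) /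
          (Real.Gamma ((d : ℝ) / 2) * Real.Gamma ε ^ 3) := by
  have h := regularized_CPW_trace_inverted_general (V := EuclideanSpace ℝ (Fin d))
    (α := ε) (β := ε) (γ := ε)
  rw [finrank_euclideanSpace_fin] at h
  convert h (by linarith) hε2 (by linarith) (by linarith) (by linarith) using 2
  ring_nf
end

section
/- Let E ≥ 1 be a natural number and let a₁, …, a_E be real numbers such that every partial sum S_i := a₁ + ⋯ + a_i is strictly positive (i = 1, …, E). Then the function α ↦ ∏_{i=1}^{E} α_i^{a_i − 1} is Lebesgue integrable on the ordered simplex {α ∈ ℝ^E : 0 ≤ α₁ ≤ α₂ ≤ ⋯ ≤ α_E ≤ 1} and ∫_{0 ≤ α₁ ≤ ⋯ ≤ α_E ≤ 1} ∏_{i=1}^{E} α_i^{a_i − 1} dα = ∏_{i=1}^{E} 1/S_i. (This is the Hepp-sector evaluation of Schwinger-parametric integrals underlying the power counting of Feynman amplitudes.) -/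
open MeasureTheory

/-!
The largest variable `x = α_E` confines the others to the same kind of simplex with `1` replaced by
`x`, so one computes the integral `I_E(t)` over `0 ≤ α₁ ≤ ⋯ ≤ α_E ≤ t` for every `t > 0`.
If `I_{E-1}(x) = x ^ S_{E-1} / (S₁ ⋯ S_{E-1})`, then the integrand in `x` is a constant multiple of
`x ^ (a_E - 1) * x ^ S_{E-1} = x ^ (S_E - 1)`, whence `I_E(t) = t ^ S_E / (S₁ ⋯ S_E)`.
Because `∫₀ᵗ x ^ (s - 1) dx = t ^ s / s` holds in `[0, ∞]` for every real `s`, once a denominator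
`s ≤ 0` is read as `0`, the same computation shows that the integral diverges as soon as some
`S_i ≤ 0`.
-/

lemma monotone_snoc_iff {n : ℕ} {X : Type*} [Preorder X] {f : Fin n → X} {x : X} :
    Monotone (Fin.snoc f x : Fin (n + 1) → X) ↔ Monotone f ∧ ∀ i, f i ≤ x := by
  simp only [Monotone, Fin.forall_fin_succ', Fin.snoc_castSucc, Fin.snoc_last,
    Fin.castSucc_le_castSucc_iff, Fin.le_last, forall_const, le_refl, and_true,
    (Fin.castSucc_lt_last _).not_ge, IsEmpty.forall_iff, implies_true, forall_and]

lemma lintegral_pi_insertNth {n : ℕ} {X : Fin (n + 1) → Type*} [∀ i, MeasurableSpace (X i)]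
    (μ : ∀ i, Measure (X i)) [∀ i, SigmaFinite (μ i)] (i : Fin (n + 1))
    {f : (∀ i, X i) → ENNReal} (hf : Measurable f) :
    ∫⁻ z, f z ∂Measure.pi μ =
      ∫⁻ x, ∫⁻ y, f (i.insertNth x y) ∂Measure.pi (fun j => μ (i.succAbove j)) ∂μ i := by
  let e := (MeasurableEquiv.piFinSuccAbove X i).symm
  calc ∫⁻ z, f z ∂Measure.pi μ
      = ∫⁻ p, f (e p) ∂(μ i).prod (Measure.pi fun j => μ (i.succAbove j)) :=
        ((measurePreserving_piFinSuccAbove μ i).symm.lintegral_comp hf).symm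
    _ = ∫⁻ x, ∫⁻ y, f (i.insertNth x y) ∂Measure.pi (fun j => μ (i.succAbove j)) ∂μ i :=
        lintegral_prod _ (hf.comp e.measurable).aemeasurable

lemma setLIntegral_Ioc_zero_rpow_sub_one {t : ℝ} (ht : 0 < t) (s : ℝ) :
    ∫⁻ x in Set.Ioc 0 t, ENNReal.ofReal (x ^ (s - 1)) =
      ENNReal.ofReal (t ^ s) / ENNReal.ofReal s := by
  have integrable_iff : IntegrableOn (fun x : ℝ => x ^ (s - 1)) (Set.Ioc 0 t) ↔ 0 < s := by
    rw [integrableOn_Ioc_iff_integrableOn_Ioo, intervalIntegral.integrableOn_Ioo_rpow_iff ht,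
      neg_lt_sub_iff_lt_add, lt_add_iff_pos_right]
  have nonneg : 0 ≤ᵐ[volume.restrict (Set.Ioc 0 t)] fun x : ℝ => x ^ (s - 1) :=
    ae_restrict_of_forall_mem measurableSet_Ioc fun x hx => Real.rpow_nonneg hx.1.le _
  rcases lt_or_ge 0 s with hs | hs
  · rw [← ofReal_integral_eq_lintegral_ofReal (integrable_iff.2 hs) nonneg,
      ← intervalIntegral.integral_of_le ht.le, integral_rpow (Or.inl (by linarith)),
      sub_add_cancel, Real.zero_rpow hs.ne', sub_zero, ENNReal.ofReal_div_of_pos hs]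
  · rw [ENNReal.ofReal_of_nonpos hs,
      ENNReal.div_zero (ENNReal.ofReal_pos.2 (Real.rpow_pos_of_pos ht s)).ne']
    by_contra finite
    have meas : AEStronglyMeasurable (fun x : ℝ => x ^ (s - 1)) (volume.restrict (Set.Ioc 0 t)) :=
      Measurable.aestronglyMeasurable (by fun_prop)
    exact hs.not_gt
      (integrable_iff.1 ((lintegral_ofReal_ne_top_iff_integrable meas nonneg).1 finite))

/-- The Hepp sector `0 ≤ α₁ ≤ ⋯ ≤ α_n ≤ t`. The upper bound `t` is kept variable for the sake of the
induction on `n`. -/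
def heppSector (n : ℕ) (t : ℝ) : Set (Fin n → ℝ) :=
  {α | Monotone α ∧ ∀ i, α i ∈ Set.Icc 0 t}

namespace heppSector

variable {n : ℕ} {t : ℝ}

lemma measurableSet : MeasurableSet (heppSector n t) := by
  have hIcc : IsClosed {α : Fin n → ℝ | ∀ i, α i ∈ Set.Icc 0 t} := by
    rw [Set.ofPred_forall]
    exact isClosed_iInter fun i => isClosed_Icc.preimage (continuous_apply i)
  exact (isClosed_monotone.inter hIcc).measurableSet

lemma snoc_mem_iff {β : Fin n → ℝ} {x : ℝ} :
    (Fin.snoc β x : Fin (n + 1) → ℝ) ∈ heppSector (n + 1) t ↔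
      x ∈ Set.Icc 0 t ∧ β ∈ heppSector n x := by
  simp only [heppSector, Set.mem_ofPred_eq, monotone_snoc_iff, Fin.forall_fin_succ',
    Fin.snoc_castSucc, Fin.snoc_last, Set.mem_Icc]
  constructor
  · rintro ⟨⟨hβ, hβx⟩, hβt, hx⟩
    exact ⟨hx, hβ, fun i => ⟨(hβt i).1, hβx i⟩⟩
  · rintro ⟨hx, hβ, hβx⟩
    exact ⟨⟨hβ, fun i => (hβx i).2⟩, fun i => ⟨(hβx i).1, (hβx i).2.trans hx.2⟩, hx⟩

lemma setLIntegral_succ {f : (Fin (n + 1) → ℝ) → ENNReal} (hf : Measurable f) :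
    ∫⁻ α in heppSector (n + 1) t, f α =
      ∫⁻ x in Set.Ioc 0 t, ∫⁻ β in heppSector n x, f (Fin.snoc β x) := by
  have indicator_snoc (x : ℝ) (β : Fin n → ℝ) :
      (heppSector (n + 1) t).indicator f (Fin.snoc β x) =
        (Set.Icc 0 t).indicator
          (fun x => (heppSector n x).indicator (fun β => f (Fin.snoc β x)) β) x := by
    classical simp only [Set.indicator_apply, snoc_mem_iff, ite_and]
  calc ∫⁻ α in heppSector (n + 1) t, f α
      = ∫⁻ x, ∫⁻ β : Fin n → ℝ, (heppSector (n + 1) t).indicator f (Fin.snoc β x) := by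
        rw [← lintegral_indicator measurableSet, volume_pi,
          lintegral_pi_insertNth _ (Fin.last n) (hf.indicator measurableSet)]
        simp only [Fin.insertNth_last', volume_pi]
    _ = ∫⁻ x in Set.Icc 0 t, ∫⁻ β in heppSector n x, f (Fin.snoc β x) := by
        rw [← lintegral_indicator measurableSet_Icc]
        refine lintegral_congr fun x => ?_
        by_cases hx : x ∈ Set.Icc 0 t
        · simp only [indicator_snoc, Set.indicator_of_mem hx, lintegral_indicator measurableSet]
        · simp only [indicator_snoc, Set.indicator_of_notMem hx, lintegral_zero]
    _ = ∫⁻ x in Set.Ioc 0 t, ∫⁻ β in heppSector n x, f (Fin.snoc β x) :=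
        setLIntegral_congr Ioc_ae_eq_Icc.symm

lemma prod_rpow_nonneg {α : Fin n → ℝ} (hα : α ∈ heppSector n t) (b : Fin n → ℝ) :
    0 ≤ ∏ i, α i ^ b i :=
  Finset.prod_nonneg fun i _ => Real.rpow_nonneg (hα.2 i).1 _

lemma setLIntegral_snoc_prod_rpow (x : ℝ) (b : Fin (n + 1) → ℝ) :
    ∫⁻ β in heppSector n x,
        ENNReal.ofReal (∏ i, (Fin.snoc β x : Fin (n + 1) → ℝ) i ^ b i) =
      (∫⁻ β in heppSector n x, ENNReal.ofReal (∏ i, β i ^ b i.castSucc)) *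
        ENNReal.ofReal (x ^ b (Fin.last n)) := by
  rw [← lintegral_mul_const _ (by fun_prop)]
  refine setLIntegral_congr_fun measurableSet fun β hβ => ?_
  simp only [Fin.prod_univ_castSucc, Fin.snoc_castSucc, Fin.snoc_last,
    ENNReal.ofReal_mul (prod_rpow_nonneg hβ _)]

theorem setLIntegral_prod_rpow (a : Fin n → ℝ) (ht : 0 < t) :
    ∫⁻ α in heppSector n t, ENNReal.ofReal (∏ i, α i ^ (a i - 1)) =
      ENNReal.ofReal (t ^ ∑ i, a i) / ∏ i, ENNReal.ofReal (∑ j ∈ Finset.Iic i, a j) := by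
  induction n generalizing t with
  | zero =>
    have : heppSector 0 t = Set.univ :=
      Set.eq_univ_of_forall fun α => ⟨Subsingleton.monotone α, fun i => i.elim0⟩
    simp [this, Measure.volume_pi_eq_dirac (0 : Fin 0 → ℝ)]
  | succ n ih =>
    set S := ∑ i, a i with hS
    set P := ∏ i : Fin n, ENNReal.ofReal (∑ j ∈ Finset.Iic i, a j.castSucc) with hP
    have prod_succ :
        ∏ i, ENNReal.ofReal (∑ j ∈ Finset.Iic i, a j) = P * ENNReal.ofReal S := by
      rw [Fin.prod_univ_castSucc, ← Fin.top_eq_last, Finset.Iic_top]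
      simp only [Fin.sum_Iic_castSucc, hP, hS]
    have inner (x : ℝ) (hx : x ∈ Set.Ioc 0 t) :
        ∫⁻ β in heppSector n x,
            ENNReal.ofReal (∏ i, (Fin.snoc β x : Fin (n + 1) → ℝ) i ^ (a i - 1)) =
          ENNReal.ofReal (x ^ (S - 1)) * P⁻¹ := by
      rw [setLIntegral_snoc_prod_rpow x, ih (fun i => a i.castSucc) hx.1, ← hP,
        div_eq_mul_inv, mul_right_comm, ← ENNReal.ofReal_mul (Real.rpow_nonneg hx.1.le _),
        ← Real.rpow_add hx.1, ← add_sub_assoc, ← Fin.sum_univ_castSucc]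
    calc ∫⁻ α in heppSector (n + 1) t, ENNReal.ofReal (∏ i, α i ^ (a i - 1))
        = ∫⁻ x in Set.Ioc 0 t, ENNReal.ofReal (x ^ (S - 1)) * P⁻¹ := by
          rw [setLIntegral_succ (by fun_prop), setLIntegral_congr_fun measurableSet_Ioc inner]
      _ = ENNReal.ofReal (t ^ S) / ENNReal.ofReal S * P⁻¹ := by
          rw [lintegral_mul_const _ (by fun_prop), setLIntegral_Ioc_zero_rpow_sub_one ht]
      _ = ENNReal.ofReal (t ^ S) / ∏ i, ENNReal.ofReal (∑ j ∈ Finset.Iic i, a j) := by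
          have hP_top : P ≠ ⊤ := ENNReal.prod_ne_top fun _ _ => ENNReal.ofReal_ne_top
          rw [prod_succ, div_eq_mul_inv, div_eq_mul_inv, mul_assoc,
            ENNReal.mul_inv (Or.inr ENNReal.ofReal_ne_top) (Or.inl hP_top), mul_comm P⁻¹]

end heppSector

theorem hepp_sector_integral_general {n : ℕ} (a : Fin n → ℝ) {t : ℝ} (ht : 0 < t) :
    (IntegrableOn (fun α : Fin n → ℝ => ∏ i, α i ^ (a i - 1)) (heppSector n t) ↔
      ∀ i, 0 < ∑ j ∈ Finset.Iic i, a j) ∧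
    ((∀ i, 0 < ∑ j ∈ Finset.Iic i, a j) →
      ∫ α in heppSector n t, ∏ i, α i ^ (a i - 1) =
        t ^ (∑ i, a i) * ∏ i, 1 / ∑ j ∈ Finset.Iic i, a j) := by
  have nonneg : 0 ≤ᵐ[volume.restrict (heppSector n t)]
      fun α : Fin n → ℝ => ∏ i, α i ^ (a i - 1) :=
    ae_restrict_of_forall_mem heppSector.measurableSet fun α hα =>
      heppSector.prod_rpow_nonneg hα _
  have meas : AEStronglyMeasurable (fun α : Fin n → ℝ => ∏ i, α i ^ (a i - 1))
      (volume.restrict (heppSector n t)) :=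
    Measurable.aestronglyMeasurable (by fun_prop)
  constructor
  · rw [IntegrableOn, ← lintegral_ofReal_ne_top_iff_integrable meas nonneg,
      heppSector.setLIntegral_prod_rpow a ht]
    simp [ENNReal.div_eq_top, Finset.prod_eq_zero_iff, Real.rpow_pos_of_pos ht]
  · intro hS
    rw [integral_eq_lintegral_of_nonneg_ae nonneg meas, heppSector.setLIntegral_prod_rpow a ht,
      ENNReal.toReal_div, ENNReal.toReal_prod, ENNReal.toReal_ofReal (Real.rpow_nonneg ht.le _)]
    simp [ENNReal.toReal_ofReal (hS _).le, div_eq_mul_inv]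

theorem hepp_sector_integral (E : ℕ) (hE : 1 ≤ E) (a : Fin E → ℝ)
    (hS : ∀ i : Fin E, 0 < ∑ j ∈ Finset.Iic i, a j) :
    MeasureTheory.IntegrableOn (fun α : Fin E → ℝ => ∏ i, α i ^ (a i - 1))
      {α : Fin E → ℝ | Monotone α ∧ ∀ i, α i ∈ Set.Icc (0 : ℝ) 1} ∧
    ∫ α in {α : Fin E → ℝ | Monotone α ∧ ∀ i, α i ∈ Set.Icc (0 : ℝ) 1},
        ∏ i, α i ^ (a i - 1)
      = ∏ i, 1 / (∑ j ∈ Finset.Iic i, a j) := by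
  obtain ⟨integrableOn_iff, integral_eq⟩ := hepp_sector_integral_general a one_pos
  exact ⟨integrableOn_iff.2 hS, (integral_eq hS).trans (by rw [Real.one_rpow, one_mul])⟩
end

section
/- Let s and w be real numbers with s > 0 and w < 2s. Then the function (α,β) ↦ e^{−α−β}·(αβ)^{s−1}·(α+β)^{−w} is Lebesgue integrable on (0,∞) × (0,∞) and ∫₀^∞∫₀^∞ e^{−α−β}(αβ)^{s−1}(α+β)^{−w} dα dβ = Γ(s)²·Γ(2s − w)/Γ(2s). -/
open Real MeasureTheory

/-!
Dirichlet–Liouville reduction: convolving the measures `x ^ (a - 1) dx` and `x ^ (b - 1) dx` on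
`(0, ∞)` gives `B(a, b) x ^ (a + b - 1) dx`, because rescaling `y = t x` turns the convolution
integral at `t` into the Beta integral. A double integral of `α ^ (a - 1) β ^ (b - 1) f (α + β)`
is therefore `B(a, b)` times the single integral of `t ^ (a + b - 1) f t`, and for
`f t = e ^ (-t) t ^ (-w)` the latter is a Gamma integral.
-/

open Set Measure
open ProbabilityTheory (beta beta_pos betaPDF betaPDF_eq lintegral_betaPDF_eq_one)
open scoped ENNReal

section WithDensity

variable {X E : Type*} [MeasurableSpace X] {μ : Measure X} [NormedAddCommGroup E] [NormedSpace ℝ E]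
  {g : X → ℝ}

lemma integrable_withDensity_ofReal_iff (hg : Measurable g) (hg₀ : 0 ≤ᵐ[μ] g) {f : X → E} :
    Integrable f (μ.withDensity fun x ↦ ENNReal.ofReal (g x)) ↔
      Integrable (fun x ↦ g x • f x) μ := by
  rw [integrable_withDensity_iff_integrable_smul' hg.ennreal_ofReal (by simp)]
  refine integrable_congr ?_
  filter_upwards [hg₀] with x hx
  rw [ENNReal.toReal_ofReal hx]

lemma integral_withDensity_ofReal (hg : Measurable g) (hg₀ : 0 ≤ᵐ[μ] g) (f : X → E) :
    ∫ x, f x ∂μ.withDensity (fun x ↦ ENNReal.ofReal (g x)) = ∫ x, g x • f x ∂μ := by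
  rw [integral_withDensity_eq_integral_toReal_smul hg.ennreal_ofReal (by simp)]
  refine integral_congr_ae ?_
  filter_upwards [hg₀] with x hx
  rw [ENNReal.toReal_ofReal hx]

end WithDensity

lemma ofReal_abs_mul_lintegral_comp_mul_left {c : ℝ} (hc : c ≠ 0) (f : ℝ → ℝ≥0∞) :
    ENNReal.ofReal |c| * ∫⁻ x, f (c * x) = ∫⁻ x, f x := by
  conv_rhs => rw [← Real.smul_map_volume_mul_left hc, lintegral_smul_measure,
    (measurableEmbedding_mulLeft₀ hc).lintegral_map, smul_eq_mul]

/-- The function `x₊ ^ (a - 1)`, i.e. zero on `(-∞, 0]`, used as the density of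
`rpowMeasure a` in convolutions over the whole line. -/
noncomputable def rpowDensity (a : ℝ) : ℝ → ℝ≥0∞ :=
  (Ioi 0).indicator fun x ↦ ENNReal.ofReal (x ^ (a - 1))

/-- The measure `x ^ (a - 1) dx` on `(0, ∞)`, viewed as a measure on `ℝ` so that it can be
convolved. -/
noncomputable def rpowMeasure (a : ℝ) : Measure ℝ :=
  (volume.restrict (Ioi 0)).withDensity fun x ↦ ENNReal.ofReal (x ^ (a - 1))

section Density

variable {a b c t x : ℝ}

lemma rpowDensity_of_pos (hx : 0 < x) : rpowDensity a x = ENNReal.ofReal (x ^ (a - 1)) :=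
  indicator_of_mem (mem_Ioi.2 hx) _

lemma rpowDensity_of_nonpos (hx : x ≤ 0) : rpowDensity a x = 0 :=
  indicator_of_notMem (notMem_Ioi.2 hx) _

lemma measurable_rpowDensity : Measurable (rpowDensity a) :=
  Measurable.indicator (by fun_prop) measurableSet_Ioi

lemma rpowDensity_mul (hc : 0 < c) (x : ℝ) :
    rpowDensity a (c * x) = ENNReal.ofReal (c ^ (a - 1)) * rpowDensity a x := by
  rcases le_or_gt x 0 with hx | hx
  · rw [rpowDensity_of_nonpos hx, mul_zero,
      rpowDensity_of_nonpos (mul_nonpos_of_nonneg_of_nonpos hc.le hx)]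
  · rw [rpowDensity_of_pos hx, rpowDensity_of_pos (mul_pos hc hx), mul_rpow hc.le hx.le,
      ENNReal.ofReal_mul (by positivity)]

lemma rpowDensity_mul_rpowDensity_one_sub (ha : 0 < a) (hb : 0 < b) (x : ℝ) :
    rpowDensity a x * rpowDensity b (1 - x) = ENNReal.ofReal (beta a b) * betaPDF a b x := by
  rw [betaPDF_eq]
  split_ifs with hx
  · have hβ := beta_pos ha hb
    rw [rpowDensity_of_pos hx.1, rpowDensity_of_pos (sub_pos.2 hx.2),
      ← ENNReal.ofReal_mul (rpow_nonneg hx.1.le _), ← ENNReal.ofReal_mul hβ.le]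
    congr 1
    field_simp
  · rw [ENNReal.ofReal_zero, mul_zero, mul_eq_zero]
    rcases le_or_gt x 0 with hx₀ | hx₀
    · exact .inl (rpowDensity_of_nonpos hx₀)
    · exact .inr (rpowDensity_of_nonpos (sub_nonpos.2 (not_lt.1 fun hx₁ ↦ hx ⟨hx₀, hx₁⟩)))

lemma rpowDensity_lconvolution_of_nonpos (ht : t ≤ 0) :
    (rpowDensity a ⋆ₗ rpowDensity b) t = 0 := by
  rw [lconvolution_def, lintegral_eq_zero_of_ae_eq_zero]
  refine .of_forall fun y ↦ mul_eq_zero.2 ?_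
  rcases le_or_gt y 0 with hy | hy
  · exact .inl (rpowDensity_of_nonpos hy)
  · exact .inr (rpowDensity_of_nonpos (by linarith))

lemma rpowDensity_lconvolution_of_pos (ha : 0 < a) (hb : 0 < b) (ht : 0 < t) :
    (rpowDensity a ⋆ₗ rpowDensity b) t =
      ENNReal.ofReal (beta a b) * ENNReal.ofReal (t ^ (a + b - 1)) := by
  have hpow : t ^ (a + b - 1) = t * (t ^ (a - 1) * t ^ (b - 1)) := by
    rw [show a + b - 1 = 1 + ((a - 1) + (b - 1)) by ring, rpow_add ht, rpow_add ht, rpow_one]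
  calc (rpowDensity a ⋆ₗ rpowDensity b) t
      = ENNReal.ofReal t * ∫⁻ x, rpowDensity a (t * x) * rpowDensity b (t * (1 - x)) := by
        rw [lconvolution_def, ← ofReal_abs_mul_lintegral_comp_mul_left ht.ne', abs_of_pos ht]
        ring_nf
    _ = ENNReal.ofReal t * ∫⁻ x, ENNReal.ofReal (t ^ (a - 1) * t ^ (b - 1) * beta a b) *
          betaPDF a b x := by
        congr 2 with x
        rw [rpowDensity_mul ht, rpowDensity_mul ht, mul_mul_mul_comm,
          rpowDensity_mul_rpowDensity_one_sub ha hb, ENNReal.ofReal_mul (by positivity),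
          ENNReal.ofReal_mul (by positivity), mul_assoc (_ * _)]
    _ = ENNReal.ofReal t * ENNReal.ofReal (t ^ (a - 1) * t ^ (b - 1) * beta a b) := by
        rw [lintegral_const_mul' _ _ ENNReal.ofReal_ne_top,
          lintegral_betaPDF_eq_one ha hb, mul_one]
    _ = ENNReal.ofReal (beta a b) * ENNReal.ofReal (t ^ (a + b - 1)) := by
        rw [← ENNReal.ofReal_mul ht.le, ← ENNReal.ofReal_mul (beta_pos ha hb).le, hpow]
        ring_nf

lemma rpowDensity_lconvolution (ha : 0 < a) (hb : 0 < b) :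
    rpowDensity a ⋆ₗ rpowDensity b = ENNReal.ofReal (beta a b) • rpowDensity (a + b) := by
  ext t
  rw [Pi.smul_apply, smul_eq_mul]
  rcases le_or_gt t 0 with ht | ht
  · rw [rpowDensity_lconvolution_of_nonpos ht, rpowDensity_of_nonpos ht, mul_zero]
  · rw [rpowDensity_lconvolution_of_pos ha hb ht, rpowDensity_of_pos ht]

end Density

section Measure

variable {a b : ℝ}

lemma rpowMeasure_eq_withDensity : rpowMeasure a = volume.withDensity (rpowDensity a) :=
  (withDensity_indicator measurableSet_Ioi _).symm

theorem rpowMeasure_conv (ha : 0 < a) (hb : 0 < b) :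
    rpowMeasure a ∗ rpowMeasure b = ENNReal.ofReal (beta a b) • rpowMeasure (a + b) := by
  simp only [rpowMeasure_eq_withDensity]
  rw [conv_withDensity_eq_lconvolution measurable_rpowDensity measurable_rpowDensity,
    rpowDensity_lconvolution ha hb, withDensity_smul _ measurable_rpowDensity]

lemma rpowMeasure_prod :
    (rpowMeasure a).prod (rpowMeasure b) = (volume.restrict (Ioi 0 ×ˢ Ioi 0)).withDensity
      fun p : ℝ × ℝ ↦ ENNReal.ofReal (p.1 ^ (a - 1) * p.2 ^ (b - 1)) := by
  rw [rpowMeasure, rpowMeasure, prod_withDensity (by fun_prop) (by fun_prop), prod_restrict,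
    ← volume_eq_prod]
  refine withDensity_congr_ae (ae_restrict_of_forall_mem (measurableSet_Ioi.prod measurableSet_Ioi)
    fun p hp ↦ (ENNReal.ofReal_mul (rpow_nonneg (le_of_lt hp.1) _)).symm)

lemma rpow_nonneg_ae_restrict_Ioi (r : ℝ) :
    0 ≤ᵐ[volume.restrict (Ioi 0)] fun x : ℝ ↦ x ^ r :=
  ae_restrict_of_forall_mem measurableSet_Ioi fun _ hx ↦ rpow_nonneg (le_of_lt hx) r

lemma rpow_mul_rpow_nonneg_ae_restrict_Ioi_prod (q r : ℝ) :
    0 ≤ᵐ[volume.restrict (Ioi 0 ×ˢ Ioi 0)] fun p : ℝ × ℝ ↦ p.1 ^ q * p.2 ^ r :=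
  ae_restrict_of_forall_mem (measurableSet_Ioi.prod measurableSet_Ioi) fun _ hp ↦
    mul_nonneg (rpow_nonneg (le_of_lt hp.1) q) (rpow_nonneg (le_of_lt hp.2) r)

lemma aestronglyMeasurable_rpowMeasure_conv {Y : Type*} [TopologicalSpace Y] {f : ℝ → Y}
    (ha : 0 < a) (hb : 0 < b) (hf : AEStronglyMeasurable f (volume.restrict (Ioi 0))) :
    AEStronglyMeasurable f (rpowMeasure a ∗ rpowMeasure b) := by
  rw [rpowMeasure_conv ha hb]
  exact (hf.mono_ac (withDensity_absolutelyContinuous _ _)).smul_measure _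

variable {E : Type*} [NormedAddCommGroup E] [NormedSpace ℝ E] {f : ℝ → E}

theorem integrableOn_rpow_mul_rpow_smul_comp_add_iff (ha : 0 < a) (hb : 0 < b)
    (hf : AEStronglyMeasurable f (volume.restrict (Ioi 0))) :
    IntegrableOn (fun p : ℝ × ℝ ↦ (p.1 ^ (a - 1) * p.2 ^ (b - 1)) • f (p.1 + p.2))
      (Ioi 0 ×ˢ Ioi 0) ↔ IntegrableOn (fun t ↦ t ^ (a + b - 1) • f t) (Ioi 0) := by
  have hβ : ENNReal.ofReal (beta a b) ≠ 0 := by simpa using beta_pos ha hb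
  rw [IntegrableOn, IntegrableOn,
    ← integrable_withDensity_ofReal_iff (by fun_prop)
      (rpow_mul_rpow_nonneg_ae_restrict_Ioi_prod (a - 1) (b - 1)),
    ← integrable_withDensity_ofReal_iff (by fun_prop) (rpow_nonneg_ae_restrict_Ioi (a + b - 1)),
    ← rpowMeasure_prod, ← rpowMeasure,
    ← integrable_smul_measure (μ := rpowMeasure (a + b)) hβ ENNReal.ofReal_ne_top,
    ← rpowMeasure_conv ha hb]
  exact (integrable_map_measure (aestronglyMeasurable_rpowMeasure_conv ha hb hf)
    measurable_add.aemeasurable).symm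

theorem setIntegral_rpow_mul_rpow_smul_comp_add (ha : 0 < a) (hb : 0 < b)
    (hf : AEStronglyMeasurable f (volume.restrict (Ioi 0))) :
    ∫ p in Ioi (0 : ℝ) ×ˢ Ioi (0 : ℝ), (p.1 ^ (a - 1) * p.2 ^ (b - 1)) • f (p.1 + p.2) =
      beta a b • ∫ t in Ioi (0 : ℝ), t ^ (a + b - 1) • f t := by
  rw [← integral_withDensity_ofReal (by fun_prop)
      (rpow_mul_rpow_nonneg_ae_restrict_Ioi_prod (a - 1) (b - 1)),
    ← integral_withDensity_ofReal (by fun_prop) (rpow_nonneg_ae_restrict_Ioi (a + b - 1)),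
    ← rpowMeasure_prod, ← rpowMeasure, ← ENNReal.toReal_ofReal (beta_pos ha hb).le,
    ← integral_smul_measure, ← rpowMeasure_conv ha hb]
  exact (integral_map measurable_add.aemeasurable
    (aestronglyMeasurable_rpowMeasure_conv ha hb hf)).symm

end Measure

lemma eqOn_exp_neg_mul_rpow_Ioi (a w : ℝ) :
    EqOn (fun t ↦ exp (-t) * t ^ (a - w - 1)) (fun t ↦ t ^ (a - 1) * (exp (-t) * t ^ (-w)))
      (Ioi 0) := fun t ht ↦ by
  simp only [show a - w - 1 = (a - 1) + -w by ring, rpow_add ht]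
  ring

lemma integrableOn_rpow_mul_exp_neg_mul_rpow_neg {a w : ℝ} (hw : w < a) :
    IntegrableOn (fun t ↦ t ^ (a - 1) * (exp (-t) * t ^ (-w))) (Ioi 0) :=
  (GammaIntegral_convergent (sub_pos.2 hw)).congr_fun (eqOn_exp_neg_mul_rpow_Ioi a w)
    measurableSet_Ioi

lemma integral_rpow_mul_exp_neg_mul_rpow_neg {a w : ℝ} (hw : w < a) :
    ∫ t in Ioi (0 : ℝ), t ^ (a - 1) * (exp (-t) * t ^ (-w)) = Gamma (a - w) := by
  rw [Gamma_eq_integral (sub_pos.2 hw),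
    setIntegral_congr_fun measurableSet_Ioi (eqOn_exp_neg_mul_rpow_Ioi a w)]

theorem double_schwinger_integral (s w : ℝ) (hs : 0 < s) (hw : w < 2 * s) :
    MeasureTheory.IntegrableOn
      (fun p : ℝ × ℝ => Real.exp (-p.1 - p.2) * (p.1 * p.2) ^ (s - 1) * (p.1 + p.2) ^ (-w))
      (Set.Ioi 0 ×ˢ Set.Ioi 0) ∧
    ∫ α in Set.Ioi (0 : ℝ), ∫ β in Set.Ioi (0 : ℝ),
        Real.exp (-α - β) * (α * β) ^ (s - 1) * (α + β) ^ (-w)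
      = Real.Gamma s ^ 2 * Real.Gamma (2 * s - w) / Real.Gamma (2 * s) := by
  let f : ℝ → ℝ := fun t ↦ exp (-t) * t ^ (-w)
  have hf : AEStronglyMeasurable f (volume.restrict (Ioi 0)) :=
    Measurable.aestronglyMeasurable (by fun_prop)
  have hw' : w < s + s := by linarith
  have hquadrant : MeasurableSet (Ioi (0 : ℝ) ×ˢ Ioi (0 : ℝ)) :=
    measurableSet_Ioi.prod measurableSet_Ioi
  have hfactor : EqOn (fun p : ℝ × ℝ ↦ (p.1 ^ (s - 1) * p.2 ^ (s - 1)) • f (p.1 + p.2))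
      (fun p ↦ exp (-p.1 - p.2) * (p.1 * p.2) ^ (s - 1) * (p.1 + p.2) ^ (-w))
      (Ioi 0 ×ˢ Ioi 0) := fun p hp ↦ by
    simp only [f, smul_eq_mul, mul_rpow (le_of_lt hp.1) (le_of_lt hp.2), neg_add']
    ring
  have hint := ((integrableOn_rpow_mul_rpow_smul_comp_add_iff hs hs hf).2
    (integrableOn_rpow_mul_exp_neg_mul_rpow_neg hw')).congr_fun hfactor hquadrant
  refine ⟨hint, ?_⟩
  rw [← setIntegral_prod _ hint, ← volume_eq_prod, ← setIntegral_congr_fun hquadrant hfactor,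
    setIntegral_rpow_mul_rpow_smul_comp_add hs hs hf]
  simp only [f, smul_eq_mul]
  rw [integral_rpow_mul_exp_neg_mul_rpow_neg hw', beta, ← two_mul]
  ring
end
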